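/- arXiv:1902.03178 — 3 statements merged into one kernel-verified Lean document; each statement's English description precedes it below -/
import Mathlib

section
/- Let G be a simple graph on a finite vertex set V, let A ⊆ V and u ∈ V. Then Odd_{G⋆u}(A) = Odd_G(A) Δ (N_G(u) ∩ A) if u ∉ Odd_G(A), and Odd_{G⋆u}(A) = Odd_G(A) Δ (N_G(u) ∖ A) if u ∈ Odd_G(A). -/
/-!
Local complementation at `u` changes the neighbourhood of a vertex `w` only if `w` is adjacent to
`u`, and then it adds `N(u) \ {w}` modulo 2. Intersecting with `A` and counting modulo 2, the
parity at such a `w` changes by the parity at `u`, corrected by one when `w ∈ A` because the loop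
at `w` is left out.
-/

open Finset symmDiff

variable {V : Type*}

/-- The neighbourhood of a vertex as a `Finset`. -/
def nbhd [Fintype V] [DecidableEq V] (G : SimpleGraph V) [DecidableRel G.Adj] (v : V) :
    Finset V :=
  Finset.univ.filter (G.Adj v)

/-- The odd neighbourhood of a set of vertices: all vertices with an odd number of
neighbours in `A`. -/
def oddNbhd [Fintype V] [DecidableEq V] (G : SimpleGraph V) [DecidableRel G.Adj]
    (A : Finset V) : Finset V :=
  Finset.univ.filter fun w => Odd (A.filter (G.Adj w)).card

/-- Local complementation of `G` at the vertex `u`. -/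
def localComp (G : SimpleGraph V) (u : V) : SimpleGraph V where
  Adj v w := v ≠ w ∧ Xor' (G.Adj v w) (G.Adj u v ∧ G.Adj u w)
  symm := by
    constructor
    rintro v w ⟨h1, h2⟩
    exact ⟨h1.symm, by rwa [G.adj_comm v w, and_comm] at h2⟩
  loopless := by constructor; rintro v ⟨h, -⟩; exact h rfl

instance {a b : Prop} [Decidable a] [Decidable b] : Decidable (Xor' a b) :=
  inferInstanceAs (Decidable ((a ∧ ¬b) ∨ (b ∧ ¬a)))

instance [DecidableEq V] (G : SimpleGraph V) [DecidableRel G.Adj] (u : V) :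
    DecidableRel (localComp G u).Adj :=
  fun v w => inferInstanceAs (Decidable (v ≠ w ∧ Xor' (G.Adj v w) (G.Adj u v ∧ G.Adj u w)))

/-- The pivot of `G` along the edge `uv`. -/
def pivot (G : SimpleGraph V) (u v : V) : SimpleGraph V :=
  localComp (localComp (localComp G u) v) u

theorem odd_card_symmDiff {α : Type*} [DecidableEq α] (s t : Finset α) :
    Odd #(s ∆ t) ↔ Xor (Odd #s) (Odd #t) := by
  have card_symmDiff : #(s ∆ t) = #(s \ t) + #(t \ s) :=
    card_union_of_disjoint disjoint_sdiff_sdiff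
  have card_left : #(s \ t) + #(s ∩ t) = #s := card_sdiff_add_card_inter s t
  have card_right : #(t \ s) + #(s ∩ t) = #t := by
    rw [inter_comm, card_sdiff_add_card_inter]
  rw [card_symmDiff, ← card_left, ← card_right]
  grind [Xor]

theorem odd_card_erase {α : Type*} [DecidableEq α] (s : Finset α) (a : α) :
    Odd #(s.erase a) ↔ Xor (Odd #s) (a ∈ s) := by
  by_cases ha : a ∈ s
  · rw [← card_erase_add_one ha, Nat.odd_add_one]
    simp only [ha, xor_comm _ True, xor_true, not_not]
  · simp only [erase_eq_of_notMem ha, ha, xor_comm _ False, xor_false, id]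

theorem localComp_adj {G : SimpleGraph V} {u v w : V} :
    (localComp G u).Adj v w ↔ v ≠ w ∧ Xor (G.Adj v w) (G.Adj u v ∧ G.Adj u w) :=
  Iff.rfl

theorem localComp_adj_of_adj {G : SimpleGraph V} {u v : V} (h : G.Adj u v) (w : V) :
    (localComp G u).Adj v w ↔ Xor (G.Adj v w) (w ≠ v ∧ G.Adj u w) := by
  have ne_of_adj : G.Adj v w → v ≠ w := SimpleGraph.Adj.ne
  grind [localComp_adj]

theorem localComp_adj_of_not_adj {G : SimpleGraph V} {u v : V} (h : ¬G.Adj u v) (w : V) :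
    (localComp G u).Adj v w ↔ G.Adj v w := by
  simpa [localComp_adj, h, xor_comm _ False] using SimpleGraph.Adj.ne

theorem filter_localComp_adj_of_adj [DecidableEq V] {G : SimpleGraph V} [DecidableRel G.Adj]
    {u v : V} (h : G.Adj u v) (A : Finset V) :
    A.filter ((localComp G u).Adj v) = A.filter (G.Adj v) ∆ (A.filter (G.Adj u)).erase v := by
  ext w
  simp only [mem_filter, mem_symmDiff, mem_erase, localComp_adj_of_adj h, Xor]
  tauto

section OddNeighbourhood

variable [Fintype V] [DecidableEq V] {G : SimpleGraph V} [DecidableRel G.Adj]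
  {A : Finset V} {u w : V}

theorem mem_nbhd : w ∈ nbhd G u ↔ G.Adj u w := by
  simp [nbhd]

theorem mem_oddNbhd : w ∈ oddNbhd G A ↔ Odd #(A.filter (G.Adj w)) := by
  simp [oddNbhd]

theorem mem_oddNbhd_localComp :
    w ∈ oddNbhd (localComp G u) A ↔
      Xor (w ∈ oddNbhd G A) (w ∈ nbhd G u ∧ Xor (u ∈ oddNbhd G A) (w ∈ A)) := by
  by_cases h : G.Adj u w
  · simp only [mem_oddNbhd, mem_nbhd, filter_localComp_adj_of_adj h, odd_card_symmDiff,
      odd_card_erase, mem_filter, h, and_true, true_and]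
  · simp only [mem_oddNbhd, mem_nbhd, localComp_adj_of_not_adj h, h, false_and, xor_comm _ False,
      xor_false, id]

end OddNeighbourhood

theorem oddNbhd_localComp [Fintype V] [DecidableEq V] (G : SimpleGraph V) [DecidableRel G.Adj]
    (A : Finset V) (u : V) :
    (u ∉ oddNbhd G A →
      oddNbhd (localComp G u) A = oddNbhd G A ∆ (nbhd G u ∩ A)) ∧
    (u ∈ oddNbhd G A →
      oddNbhd (localComp G u) A = oddNbhd G A ∆ (nbhd G u \ A)) := by
  refine ⟨fun hu => ?_, fun hu => ?_⟩ <;> ext w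
  · simp only [mem_oddNbhd_localComp, mem_symmDiff, mem_inter, ← xor_def, hu, xor_false, id]
  · simp only [mem_oddNbhd_localComp, mem_symmDiff, mem_sdiff, ← xor_def, hu, xor_true]
end

section
/- Let (G,I,O) be an open graph that admits a focused gFlow, and let u, v be adjacent vertices of G with u,v ∉ I ∪ O. Then the open graph (G', I, O), where G' := (G∧uv) ∖ {u,v} is obtained from the pivot of G along the edge uv by deleting the vertices u and v, also admits a focused gFlow. -/
open Finset symmDiff

variable {V : Type*}

instance [DecidableEq V] (G : SimpleGraph V) [DecidableRel G.Adj] (u v : V) :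
    DecidableRel (pivot G u v).Adj :=
  inferInstanceAs (DecidableRel (localComp (localComp (localComp G u) v) u).Adj)

instance {α β : Type*} (G : SimpleGraph β) [DecidableRel G.Adj] (f : α → β) :
    DecidableRel (G.comap f).Adj :=
  fun a b => inferInstanceAs (Decidable (G.Adj (f a) (f b)))

/-- `(g, r)` is a focused gFlow on the open graph `(G, I, O)`: `r` is a strict partial
order, each correction set `g u` (for `u ∉ O`) avoids the inputs, its odd neighbourhood
meets the non-outputs exactly in `{u}`, and `g u` lies strictly in the future of `u`. -/
def IsFocusedGFlow [Fintype V] [DecidableEq V] (G : SimpleGraph V) [DecidableRel G.Adj]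
    (I O : Finset V) (g : V → Finset V) (r : V → V → Prop) : Prop :=
  (∀ a, ¬ r a a) ∧ (∀ a b c, r a b → r b c → r a c) ∧
    ∀ u ∉ O, g u ∩ I = ∅ ∧ oddNbhd G (g u) \ O = {u} ∧ ∀ v ∈ g u, r u v

/-- The open graph `(G, I, O)` admits a focused gFlow. -/
def HasFocusedGFlow [Fintype V] [DecidableEq V] (G : SimpleGraph V) [DecidableRel G.Adj]
    (I O : Finset V) : Prop :=
  ∃ g r, IsFocusedGFlow G I O g r

/-!
Work over `ZMod 2`, where membership in `oddNbhd G A` says that the row of the adjacency matrix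
sums to `1` over `A`. Away from `u` and `v`, the adjacency matrix of the pivot along the edge `uv`
is the Schur complement of the invertible block of `G` on `{u, v}`, namely
`A x y + A u x * A v y + A v x * A u y`: it is obtained from row `x` by adding multiples of the
rows `u` and `v`. Over a set with neither `u` nor `v` in its odd neighbourhood these two rows sum
to `0`, so on the remaining vertices its odd neighbourhood is unchanged by the pivot. Since `u`
and `v` are not outputs, every correction set of a vertex other than `u` and `v` has this
property, so restricting the correction sets and the order to the remaining vertices gives a
focused gFlow.
-/

section LocalComplementation

variable (G : SimpleGraph V) (u : V) {x y : V}

theorem localComp_adj_of_ne (hxy : x ≠ y) :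
    (localComp G u).Adj x y ↔ Xor (G.Adj x y) (G.Adj u x ∧ G.Adj u y) :=
  and_iff_right hxy

theorem localComp_adj_self : (localComp G u).Adj u x ↔ G.Adj u x := by
  obtain rfl | hux := eq_or_ne u x
  · simp only [SimpleGraph.irrefl]
  · simp only [localComp_adj_of_ne G u hux, SimpleGraph.irrefl, false_and, xor_def,
      not_false_eq_true, and_true, or_false]

variable [DecidableEq V] [DecidableRel G.Adj]

theorem adjMatrix_localComp_apply_of_ne (hxy : x ≠ y) :
    (localComp G u).adjMatrix (ZMod 2) x y =
      G.adjMatrix (ZMod 2) x y + G.adjMatrix (ZMod 2) u x * G.adjMatrix (ZMod 2) u y := by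
  have one_add_one : (1 : ZMod 2) + 1 = 0 := CharTwo.add_self_eq_zero 1
  simp only [SimpleGraph.adjMatrix_apply, localComp_adj_of_ne G u hxy]
  by_cases hx : G.Adj u x <;> by_cases hy : G.Adj u y <;> by_cases h : G.Adj x y <;> simp [*]

theorem adjMatrix_localComp_apply_self :
    (localComp G u).adjMatrix (ZMod 2) u x = G.adjMatrix (ZMod 2) u x := by
  simp only [SimpleGraph.adjMatrix_apply, localComp_adj_self]

end LocalComplementation

section Pivot

variable [DecidableEq V] {G : SimpleGraph V} [DecidableRel G.Adj] {u v x y : V}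

theorem adjMatrix_localComp_localComp_apply (huv : G.Adj u v) (hxu : x ≠ u) (hxv : x ≠ v) :
    (localComp (localComp G u) v).adjMatrix (ZMod 2) u x = G.adjMatrix (ZMod 2) v x := by
  have adj_uv : G.adjMatrix (ZMod 2) u v = 1 := by simp [huv]
  have adj_vu : (localComp G u).adjMatrix (ZMod 2) v u = 1 := by
    simp [(localComp G u).adj_comm v u, localComp_adj_self, huv]
  rw [adjMatrix_localComp_apply_of_ne _ v hxu.symm, adjMatrix_localComp_apply_self,
    adjMatrix_localComp_apply_of_ne G u hxv.symm, adj_uv, adj_vu, one_mul, one_mul,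
    add_left_comm, CharTwo.add_self_eq_zero, add_zero]

theorem adjMatrix_pivot_apply (huv : G.Adj u v) (hxu : x ≠ u) (hxv : x ≠ v)
    (hyu : y ≠ u) (hyv : y ≠ v) :
    (pivot G u v).adjMatrix (ZMod 2) x y =
      G.adjMatrix (ZMod 2) x y + G.adjMatrix (ZMod 2) u x * G.adjMatrix (ZMod 2) v y +
        G.adjMatrix (ZMod 2) v x * G.adjMatrix (ZMod 2) u y := by
  obtain rfl | hxy := eq_or_ne x y
  · simp only [SimpleGraph.adjMatrix_apply _ x x, SimpleGraph.irrefl, if_false, zero_add]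
    rw [mul_comm, CharTwo.add_self_eq_zero]
  have adj_uv : G.adjMatrix (ZMod 2) u v = 1 := by simp [huv]
  calc
    (pivot G u v).adjMatrix (ZMod 2) x y
      = (localComp (localComp G u) v).adjMatrix (ZMod 2) x y +
          G.adjMatrix (ZMod 2) v x * G.adjMatrix (ZMod 2) v y := by
        rw [← adjMatrix_localComp_localComp_apply huv hxu hxv,
          ← adjMatrix_localComp_localComp_apply huv hyu hyv]
        exact adjMatrix_localComp_apply_of_ne _ u hxy
    _ = G.adjMatrix (ZMod 2) x y + G.adjMatrix (ZMod 2) u x * G.adjMatrix (ZMod 2) u y +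
          (G.adjMatrix (ZMod 2) v x + G.adjMatrix (ZMod 2) u x) *
            (G.adjMatrix (ZMod 2) v y + G.adjMatrix (ZMod 2) u y) +
          G.adjMatrix (ZMod 2) v x * G.adjMatrix (ZMod 2) v y := by
        rw [adjMatrix_localComp_apply_of_ne _ v hxy, adjMatrix_localComp_apply_of_ne G u hxy,
          adjMatrix_localComp_apply_of_ne G u hxv.symm,
          adjMatrix_localComp_apply_of_ne G u hyv.symm, adj_uv, one_mul, one_mul]
    _ = _ := by grind

/-- The graph `(G∧uv) ∖ {u, v}`. -/
abbrev pivotDelete (G : SimpleGraph V) (u v : V) : SimpleGraph {x : V // x ≠ u ∧ x ≠ v} :=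
  (pivot G u v).comap Subtype.val

theorem sum_adjMatrix_pivotDelete (huv : G.Adj u v) (A : Finset V)
    (x : {x : V // x ≠ u ∧ x ≠ v}) :
    ∑ y ∈ A.subtype (fun x => x ≠ u ∧ x ≠ v), (pivotDelete G u v).adjMatrix (ZMod 2) x y =
      ∑ y ∈ A, G.adjMatrix (ZMod 2) x y +
        G.adjMatrix (ZMod 2) u x * ∑ y ∈ A, G.adjMatrix (ZMod 2) v y +
        G.adjMatrix (ZMod 2) v x * ∑ y ∈ A, G.adjMatrix (ZMod 2) u y := by
  let schur (y : V) : ZMod 2 :=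
    G.adjMatrix (ZMod 2) x y + G.adjMatrix (ZMod 2) u x * G.adjMatrix (ZMod 2) v y +
      G.adjMatrix (ZMod 2) v x * G.adjMatrix (ZMod 2) u y
  have schur_u : schur u = 0 := by
    simp [schur, huv.symm, G.adj_comm x u, CharTwo.add_self_eq_zero]
  have schur_v : schur v = 0 := by
    simp [schur, huv, G.adj_comm x v, CharTwo.add_self_eq_zero]
  calc
    ∑ y ∈ A.subtype (fun x => x ≠ u ∧ x ≠ v), (pivotDelete G u v).adjMatrix (ZMod 2) x y
      = ∑ y ∈ A.subtype (fun x => x ≠ u ∧ x ≠ v), schur y :=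
        sum_congr rfl fun y _ => adjMatrix_pivot_apply huv x.2.1 x.2.2 y.2.1 y.2.2
    _ = ∑ y ∈ A with y ≠ u ∧ y ≠ v, schur y := sum_subtype_eq_sum_filter schur
    _ = ∑ y ∈ A, schur y :=
        sum_filter_of_ne fun y _ hy =>
          ⟨fun h => hy (h ▸ schur_u), fun h => hy (h ▸ schur_v)⟩
    _ = _ := by simp only [schur, sum_add_distrib, mul_sum]

end Pivot

section OddNeighbourhood

variable [Fintype V] [DecidableEq V] {G : SimpleGraph V} [DecidableRel G.Adj] {A : Finset V}

theorem mem_oddNbhd_iff_sum_eq_one {x : V} :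
    x ∈ oddNbhd G A ↔ ∑ y ∈ A, G.adjMatrix (ZMod 2) x y = 1 := by
  simp only [oddNbhd, mem_filter, mem_univ, true_and, SimpleGraph.adjMatrix_apply, sum_boole,
    ZMod.natCast_eq_one_iff_odd]

theorem notMem_oddNbhd_iff_sum_eq_zero {x : V} :
    x ∉ oddNbhd G A ↔ ∑ y ∈ A, G.adjMatrix (ZMod 2) x y = 0 := by
  simp only [oddNbhd, mem_filter, mem_univ, true_and, SimpleGraph.adjMatrix_apply, sum_boole,
    ZMod.natCast_eq_zero_iff_even, Nat.not_odd_iff_even]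

theorem mem_oddNbhd_pivotDelete_iff {u v : V} (huv : G.Adj u v) (hu : u ∉ oddNbhd G A)
    (hv : v ∉ oddNbhd G A) {x : {x : V // x ≠ u ∧ x ≠ v}} :
    x ∈ oddNbhd (pivotDelete G u v) (A.subtype fun x => x ≠ u ∧ x ≠ v) ↔ ↑x ∈ oddNbhd G A := by
  rw [notMem_oddNbhd_iff_sum_eq_zero] at hu hv
  rw [mem_oddNbhd_iff_sum_eq_one, mem_oddNbhd_iff_sum_eq_one, sum_adjMatrix_pivotDelete huv, hu, hv,
    mul_zero, mul_zero, add_zero, add_zero]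

end OddNeighbourhood

namespace IsFocusedGFlow

variable [Fintype V] [DecidableEq V] {G : SimpleGraph V} [DecidableRel G.Adj] {I O : Finset V}
  {g : V → Finset V} {r : V → V → Prop}

theorem mem_oddNbhd_iff (h : IsFocusedGFlow G I O g r) {w x : V} (hw : w ∉ O) (hx : x ∉ O) :
    x ∈ oddNbhd G (g w) ↔ x = w := by
  obtain ⟨-, odd_eq, -⟩ := h.2.2 w hw
  rw [← mem_singleton, ← odd_eq, mem_sdiff, and_iff_left hx]

theorem pivotDelete (h : IsFocusedGFlow G I O g r) {u v : V} (huv : G.Adj u v)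
    (hu : u ∉ O) (hv : v ∉ O) :
    IsFocusedGFlow (pivotDelete G u v) (I.subtype fun x => x ≠ u ∧ x ≠ v)
      (O.subtype fun x => x ≠ u ∧ x ≠ v) (fun w => (g w).subtype fun x => x ≠ u ∧ x ≠ v)
      (fun a b => r a b) := by
  refine ⟨fun a => h.1 a, fun a b c => h.2.1 a b c, fun w hwO => ?_⟩
  have hw : ↑w ∉ O := fun hw => hwO (mem_subtype.mpr hw)
  obtain ⟨avoids_inputs, -, future⟩ := h.2.2 w hw
  have u_notMem_odd : u ∉ oddNbhd G (g w) := fun hmem =>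
    w.2.1 ((h.mem_oddNbhd_iff hw hu).mp hmem).symm
  have v_notMem_odd : v ∉ oddNbhd G (g w) := fun hmem =>
    w.2.2 ((h.mem_oddNbhd_iff hw hv).mp hmem).symm
  refine ⟨?_, ?_, fun x hx => future x (mem_subtype.mp hx)⟩
  · simp only [eq_empty_iff_forall_notMem, mem_inter, mem_subtype] at avoids_inputs ⊢
    exact fun x => avoids_inputs x
  · ext x
    rw [mem_sdiff, mem_subtype, mem_oddNbhd_pivotDelete_iff huv u_notMem_odd v_notMem_odd,
      mem_singleton, ← Subtype.coe_inj]
    constructor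
    · rintro ⟨hodd, hx⟩
      exact (h.mem_oddNbhd_iff hw hx).mp hodd
    · intro hxw
      rw [hxw]
      exact ⟨(h.mem_oddNbhd_iff hw hw).mpr rfl, hw⟩

end IsFocusedGFlow

theorem hasFocusedGFlow_pivot_delete_general [Fintype V] [DecidableEq V]
    (G : SimpleGraph V) [DecidableRel G.Adj] (I O : Finset V)
    (h : HasFocusedGFlow G I O) (u v : V) (huv : G.Adj u v) (hu : u ∉ O) (hv : v ∉ O) :
    HasFocusedGFlow
      ((pivot G u v).comap (Subtype.val : {x : V // x ≠ u ∧ x ≠ v} → V))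
      (I.subtype (fun x => x ≠ u ∧ x ≠ v)) (O.subtype (fun x => x ≠ u ∧ x ≠ v)) := by
  obtain ⟨g, r, hgr⟩ := h
  exact ⟨_, _, hgr.pivotDelete huv hu hv⟩

theorem hasFocusedGFlow_pivot_delete [Fintype V] [DecidableEq V]
    (G : SimpleGraph V) [DecidableRel G.Adj] (I O : Finset V)
    (h : HasFocusedGFlow G I O) (u v : V) (huv : G.Adj u v)
    (hu : u ∉ I ∪ O) (hv : v ∉ I ∪ O) :
    HasFocusedGFlow
      ((pivot G u v).comap (Subtype.val : {x : V // x ≠ u ∧ x ≠ v} → V))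
      (I.subtype (fun x => x ≠ u ∧ x ≠ v)) (O.subtype (fun x => x ≠ u ∧ x ≠ v)) :=
  hasFocusedGFlow_pivot_delete_general G I O h u v huv
    (fun h => hu (mem_union_right I h)) (fun h => hv (mem_union_right I h))
end

section
/- Let G be a simple graph on a finite vertex set V, let A ⊆ V, let u ∈ V and v ∈ N_G(u). Then: Odd_{G∧uv}(A) = Odd_G(A) if u,v ∉ cOdd_G(A); Odd_{G∧uv}(A) = Odd_G(A) Δ N_G[v] if u ∈ cOdd_G(A) and v ∉ cOdd_G(A); Odd_{G∧uv}(A) = Odd_G(A) Δ N_G[u] if u ∉ cOdd_G(A) and v ∈ cOdd_G(A); and Odd_{G∧uv}(A) = Odd_G(A) Δ N_G[u] Δ N_G[v] if u,v ∈ cOdd_G(A). -/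
open Finset symmDiff

variable {V : Type*}

/-- The closed neighbourhood of a vertex. -/
def clNbhd [Fintype V] [DecidableEq V] (G : SimpleGraph V) [DecidableRel G.Adj] (v : V) :
    Finset V :=
  insert v (nbhd G v)

/-- The closed odd neighbourhood of a set of vertices. -/
def cOddNbhd [Fintype V] [DecidableEq V] (G : SimpleGraph V) [DecidableRel G.Adj]
    (A : Finset V) : Finset V :=
  oddNbhd G A ∆ A

/-!
Work over `ZMod 2`, where `Odd_G(A)` is the product of the adjacency matrix `M` with the
characteristic vector of `A`, and `cOdd_G(A)` is the product of `M + 1` with that vector. A local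
complementation adds to `M` the adjacency matrix `K(a)` of the clique on `a`, the neighbourhood of
the chosen vertex. For a pivot the three neighbourhoods are `a = N(u)`, `a + b` and `b + e`, where
`b = N[v]` and `e` is the indicator of `u`. Since `K` is quadratic with polar form `x yᵀ + y xᵀ`
and `K(e) = 0`, the sum `K(a) + K(a + b) + K(b + e)` is `(a + e) bᵀ + b (a + e)ᵀ`: pivoting adds
`N[u] N[v]ᵀ + N[v] N[u]ᵀ` to `M`. Applied to the characteristic vector of `A`, the two summands
are `N[u]` if `v ∈ cOdd_G(A)` and `N[v]` if `u ∈ cOdd_G(A)`.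
-/

open Matrix

section CharVec

variable [DecidableEq V]

/-- The characteristic vector of `A` over `ZMod 2`; it turns symmetric differences into sums. -/
def charVec (A : Finset V) : V → ZMod 2 := fun w => if w ∈ A then 1 else 0

theorem charVec_injective : Function.Injective (charVec : Finset V → V → ZMod 2) := by
  intro A B h
  ext w
  have hw := congrFun h w
  by_cases hA : w ∈ A <;> by_cases hB : w ∈ B <;> simp_all [charVec]

theorem charVec_symmDiff (A B : Finset V) : charVec (A ∆ B) = charVec A + charVec B := by
  ext w
  by_cases hA : w ∈ A <;> by_cases hB : w ∈ B <;>
    simp [charVec, mem_symmDiff, hA, hB, CharTwo.add_self_eq_zero]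

theorem charVec_ite_mem_empty (A B : Finset V) (w : V) :
    charVec (if w ∈ A then B else ∅) = charVec A w • charVec B := by
  ext x
  by_cases hw : w ∈ A <;> simp [charVec, hw]

end CharVec

section CliqueMatrix

variable [DecidableEq V]

/-- The adjacency matrix over `ZMod 2` of the complete graph on the support of `x`. The diagonal
term cancels the loops of `vecMulVec x x`, because `t * t = t` in `ZMod 2`. -/
def cliqueMatrix (x : V → ZMod 2) : Matrix V V (ZMod 2) := vecMulVec x x + diagonal x

theorem cliqueMatrix_apply_self (x : V → ZMod 2) (w : V) : cliqueMatrix x w w = 0 := by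
  have square_add_self : ∀ t : ZMod 2, t * t + t = 0 := by decide
  simpa [cliqueMatrix, vecMulVec_apply] using square_add_self (x w)

theorem cliqueMatrix_apply_of_ne (x : V → ZMod 2) {v w : V} (hvw : v ≠ w) :
    cliqueMatrix x v w = x v * x w := by
  simp [cliqueMatrix, vecMulVec_apply, hvw]

theorem cliqueMatrix_add (x y : V → ZMod 2) :
    cliqueMatrix (x + y) =
      cliqueMatrix x + cliqueMatrix y + (vecMulVec x y + vecMulVec y x) := by
  have hdiag : diagonal (x + y) = diagonal x + diagonal y := (diagonal_add x y).symm
  rw [cliqueMatrix, hdiag, vecMulVec_add, add_vecMulVec, add_vecMulVec, cliqueMatrix, cliqueMatrix]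
  abel

theorem cliqueMatrix_single (u : V) : cliqueMatrix (Pi.single u 1) = 0 := by
  rw [cliqueMatrix, diagonal_single, single_eq_single_vecMulVec_single]
  exact ZModModule.add_self _

end CliqueMatrix

section LocalComplementation

variable (G : SimpleGraph V)

theorem localComp_adj_of_ne_s7 (u : V) {v w : V} (hvw : v ≠ w) :
    (localComp G u).Adj v w ↔ (G.Adj v w ↔ ¬(G.Adj u v ∧ G.Adj u w)) :=
  (and_iff_right hvw).trans (xor_iff_iff_not ..)

variable [DecidableEq V] [DecidableRel G.Adj]

/-- The adjacency matrix over `ZMod 2` with ones on the diagonal; its rows are the characteristic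
vectors of the closed neighbourhoods. -/
def closedAdjMatrix : Matrix V V (ZMod 2) := G.adjMatrix (ZMod 2) + 1

theorem closedAdjMatrix_row (v : V) :
    closedAdjMatrix G v = G.adjMatrix (ZMod 2) v + Pi.single v 1 := by
  ext w
  simp [closedAdjMatrix, one_apply, Pi.single_apply, eq_comm]

theorem adjMatrix_localComp (u : V) :
    (localComp G u).adjMatrix (ZMod 2) =
      G.adjMatrix (ZMod 2) + cliqueMatrix (G.adjMatrix (ZMod 2) u) := by
  ext v w
  rcases eq_or_ne v w with rfl | hvw
  · simp [cliqueMatrix_apply_self]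
  · by_cases hv : G.Adj u v <;> by_cases hw : G.Adj u w <;> by_cases h : G.Adj v w <;>
      simp [localComp_adj_of_ne_s7, cliqueMatrix_apply_of_ne, hvw, hv, hw, h,
        CharTwo.add_self_eq_zero]

theorem adjMatrix_localComp_row (u v : V) :
    (localComp G u).adjMatrix (ZMod 2) v =
      G.adjMatrix (ZMod 2) v +
        G.adjMatrix (ZMod 2) u v • (G.adjMatrix (ZMod 2) u + Pi.single v 1) := by
  ext w
  rw [adjMatrix_localComp, Matrix.add_apply]
  rcases eq_or_ne v w with rfl | hvw
  · by_cases h : G.Adj u v <;> simp [cliqueMatrix_apply_self, h, CharTwo.add_self_eq_zero]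
  · simp only [cliqueMatrix_apply_of_ne _ hvw, Pi.add_apply, Pi.smul_apply,
      Pi.single_eq_of_ne' hvw, add_zero, smul_eq_mul]

theorem adjMatrix_localComp_row_self (u : V) :
    (localComp G u).adjMatrix (ZMod 2) u = G.adjMatrix (ZMod 2) u := by
  simp [adjMatrix_localComp_row]

variable {G}

theorem adjMatrix_localComp_row_of_adj {u v : V} (huv : G.Adj u v) :
    (localComp G u).adjMatrix (ZMod 2) v = G.adjMatrix (ZMod 2) u + closedAdjMatrix G v := by
  rw [adjMatrix_localComp_row, closedAdjMatrix_row, SimpleGraph.adjMatrix_apply, if_pos huv,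
    one_smul]
  abel

theorem adjMatrix_localComp_localComp_row_of_adj {u v : V} (huv : G.Adj u v) :
    (localComp (localComp G u) v).adjMatrix (ZMod 2) u =
      closedAdjMatrix G v + Pi.single u 1 := by
  have hvu : (localComp G u).Adj v u := by simp [localComp_adj_of_ne_s7, huv.ne', huv.symm]
  rw [adjMatrix_localComp_row_of_adj hvu, closedAdjMatrix_row, adjMatrix_localComp_row_self,
    adjMatrix_localComp_row_of_adj huv]
  linear_combination (norm := module)
    (CharTwo.two_eq_zero : (2 : ZMod 2) = 0) • G.adjMatrix (ZMod 2) u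

theorem adjMatrix_pivot {u v : V} (huv : G.Adj u v) :
    (pivot G u v).adjMatrix (ZMod 2) =
      G.adjMatrix (ZMod 2) + vecMulVec (closedAdjMatrix G u) (closedAdjMatrix G v) +
        vecMulVec (closedAdjMatrix G v) (closedAdjMatrix G u) := by
  set M := G.adjMatrix (ZMod 2)
  set a := M u
  set b := closedAdjMatrix G v
  set e : V → ZMod 2 := Pi.single u 1
  calc (pivot G u v).adjMatrix (ZMod 2)
    _ = (localComp (localComp G u) v).adjMatrix (ZMod 2) + cliqueMatrix (b + e) := by
        rw [← adjMatrix_localComp_localComp_row_of_adj huv]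
        exact adjMatrix_localComp ..
    _ = M + cliqueMatrix a + cliqueMatrix (a + b) + cliqueMatrix (b + e) := by
        rw [adjMatrix_localComp, adjMatrix_localComp_row_of_adj huv, adjMatrix_localComp]
    _ = M + vecMulVec (a + e) b + vecMulVec b (a + e) := by
        simp only [cliqueMatrix_add, cliqueMatrix_single, add_vecMulVec, vecMulVec_add, e]
        linear_combination (norm := module)
          (CharTwo.two_eq_zero : (2 : ZMod 2) = 0) • (cliqueMatrix a + cliqueMatrix b)
    _ = M + vecMulVec (closedAdjMatrix G u) b + vecMulVec b (closedAdjMatrix G u) := by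
        rw [closedAdjMatrix_row G u]

end LocalComplementation

section OddNeighbourhood

variable [Fintype V] [DecidableEq V] (G : SimpleGraph V) [DecidableRel G.Adj]

theorem charVec_clNbhd (v : V) : charVec (clNbhd G v) = closedAdjMatrix G v := by
  ext w
  by_cases h : w = v <;> simp [charVec, clNbhd, nbhd, closedAdjMatrix_row, h]

theorem charVec_oddNbhd (A : Finset V) :
    charVec (oddNbhd G A) = G.adjMatrix (ZMod 2) *ᵥ charVec A := by
  ext w
  have card_cast :
      (#{x ∈ A | G.Adj w x} : ZMod 2) = (G.adjMatrix (ZMod 2) *ᵥ charVec A) w := by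
    simp [mulVec, dotProduct, charVec]
  rw [← card_cast]
  by_cases h : Odd #{x ∈ A | G.Adj w x}
  · simp [charVec, oddNbhd, h, ZMod.natCast_eq_one_iff_odd.mpr h]
  · simp [charVec, oddNbhd, h, ZMod.natCast_eq_zero_iff_even.mpr (Nat.not_odd_iff_even.mp h)]

theorem charVec_cOddNbhd (A : Finset V) :
    charVec (cOddNbhd G A) = closedAdjMatrix G *ᵥ charVec A := by
  rw [cOddNbhd, charVec_symmDiff, charVec_oddNbhd, closedAdjMatrix, add_mulVec, one_mulVec]

variable {G} in
theorem oddNbhd_pivot_eq_symmDiff_ite {u v : V} (huv : G.Adj u v) (A : Finset V) :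
    oddNbhd (pivot G u v) A =
      oddNbhd G A ∆ (if v ∈ cOddNbhd G A then clNbhd G u else ∅) ∆
        (if u ∈ cOddNbhd G A then clNbhd G v else ∅) := by
  have closed_row_dot (w : V) : closedAdjMatrix G w ⬝ᵥ charVec A = charVec (cOddNbhd G A) w :=
    (congrFun (charVec_cOddNbhd G A) w).symm
  apply charVec_injective
  calc charVec (oddNbhd (pivot G u v) A)
    _ = G.adjMatrix (ZMod 2) *ᵥ charVec A +
          (closedAdjMatrix G v ⬝ᵥ charVec A) • closedAdjMatrix G u +
          (closedAdjMatrix G u ⬝ᵥ charVec A) • closedAdjMatrix G v := by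
        simp only [charVec_oddNbhd, adjMatrix_pivot huv, add_mulVec, vecMulVec_mulVec,
          op_smul_eq_smul]
    _ = charVec (oddNbhd G A) + charVec (cOddNbhd G A) v • charVec (clNbhd G u) +
          charVec (cOddNbhd G A) u • charVec (clNbhd G v) := by
        simp only [charVec_oddNbhd, closed_row_dot, charVec_clNbhd]
    _ = _ := by simp only [charVec_symmDiff, charVec_ite_mem_empty]

end OddNeighbourhood

theorem oddNbhd_pivot [Fintype V] [DecidableEq V] (G : SimpleGraph V) [DecidableRel G.Adj]
    (A : Finset V) (u : V) (v : V) (hv : v ∈ nbhd G u) :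
    (u ∉ cOddNbhd G A → v ∉ cOddNbhd G A →
      oddNbhd (pivot G u v) A = oddNbhd G A) ∧
    (u ∈ cOddNbhd G A → v ∉ cOddNbhd G A →
      oddNbhd (pivot G u v) A = oddNbhd G A ∆ clNbhd G v) ∧
    (u ∉ cOddNbhd G A → v ∈ cOddNbhd G A →
      oddNbhd (pivot G u v) A = oddNbhd G A ∆ clNbhd G u) ∧
    (u ∈ cOddNbhd G A → v ∈ cOddNbhd G A →
      oddNbhd (pivot G u v) A = oddNbhd G A ∆ clNbhd G u ∆ clNbhd G v) := by
  have huv : G.Adj u v := by simpa only [nbhd, mem_filter_univ] using hv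
  rw [oddNbhd_pivot_eq_symmDiff_ite huv]
  refine ⟨fun huA hvA => ?_, fun huA hvA => ?_, fun huA hvA => ?_, fun huA hvA => ?_⟩ <;>
    simp [huA, hvA, ← bot_eq_empty]
end
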